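/- Assume (σ_min + σ_min,2)/2 < τ < (σ_max + σ_max,2)/2, τ ≠ σᵢ for all 1 ≤ i ≤ N, and δ < d₂ where d₂ = min_{2≤i≤N} |σᵢ − τ|, and let r ∈ ℝ^{M+N} satisfy Π̃ r = r. Then for every j ∈ ℕ there exists w ∈ K_j(B̃₁, r) such that ‖B̃₁ w + r‖ ≤ 2 · (1 − 2/(1 + (σ_max + τ + δ)/(d₂ − δ)))^{⌊j/2⌋} · ‖r‖, where ⌊·⌋ denotes the integer part. -/

import Mathlib

open Matrix

noncomputable def vnorm {ι : Type*} [Fintype ι] (x : ι → ℝ) : ℝ :=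
  Real.sqrt (∑ i, x i ^ 2)

noncomputable def specNorm {ι κ : Type*} [Fintype ι] [Fintype κ] [DecidableEq κ]
    (A : Matrix ι κ ℝ) : ℝ :=
  ‖LinearMap.toContinuousLinearMap (Matrix.toEuclideanLin A)‖

noncomputable def Krylov {ι : Type*} [Fintype ι] [DecidableEq ι]
    (B : Matrix ι ι ℝ) (r : ι → ℝ) (j : ℕ) : Submodule ℝ (ι → ℝ) :=
  Submodule.span ℝ {x | ∃ i < j, x = (B ^ i) *ᵥ r}

/-!
The deflated matrix `Π̃ B Π̃` is compared with the restriction of `B` to the orthogonal complement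
of the exact singular vectors, an invariant subspace on which the eigenvalues `± σᵢ - τ` and `-τ`
of `B` satisfy `d ≤ |λ| ≤ σ_max + τ`. A pair of Householder reflections, exchanging `u₁` with `ũ₁`
and `v₁` with `ṽ₁` up to sign, maps this complement isometrically onto the range of `Π̃`. It changes
the bilinear form of `B` there by at most `δ`: the contribution of first order in the angles
vanishes since `A v₁` and `Aᵀ u₁` are multiples of `u₁` and `v₁`. So the eigenvalues of `Π̃ B Π̃` on
the range of `Π̃` satisfy `d - δ ≤ |λ| ≤ σ_max + τ`, and a Chebyshev polynomial in `λ ^ 2` bounds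
the MINRES residual.
-/

section Residual

open Polynomial

theorem half_pow_le_eval_chebyshev_T {z : ℝ} (hz : 0 < z) (k : ℕ) :
    z ^ k / 2 ≤ (Chebyshev.T ℝ k).eval ((z + z⁻¹) / 2) := by
  have hexp : Real.exp (((k : ℤ) : ℝ) * Real.log z) = z ^ k := by
    rw [Int.cast_natCast, Real.exp_nat_mul, Real.exp_log hz]
  rw [← Real.cosh_log hz, Chebyshev.T_real_cosh, Real.cosh_eq, hexp]
  gcongr
  exact le_add_of_nonneg_right (Real.exp_nonneg _)

theorem one_sub_two_div_one_add_div {a b : ℝ} (ha : a ≠ 0) (hab : a + b ≠ 0) :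
    1 - 2 / (1 + b / a) = (b - a) / (a + b) := by
  have hdiv : 1 + b / a = (a + b) / a := by field_simp
  rw [hdiv]
  field_simp
  ring

-- `p = T_k ∘ ℓ / T_k (ℓ 0)`, where `ℓ` is the affine function of `x ^ 2` that maps
-- `[a ^ 2, b ^ 2]` onto `[-1, 1]`; writing `ℓ 0 = (z + z⁻¹) / 2`, the base of the rate is `z⁻¹`.
theorem exists_residual_polynomial_of_lt {a b : ℝ} (ha : 0 < a) (hab : a < b) (k : ℕ) :
    ∃ p : ℝ[X], p.natDegree ≤ 2 * k ∧ p.coeff 0 = 1 ∧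
      ∀ x : ℝ, a ≤ |x| → |x| ≤ b → |p.eval x| ≤ 2 * (1 - 2 / (1 + b / a)) ^ k := by
  set z : ℝ := (a + b) / (b - a) with hz
  have hsub : 0 < b - a := sub_pos.mpr hab
  have hadd : 0 < a + b := by linarith
  have hz0 : 0 < z := by positivity
  have hrate : 1 - 2 / (1 + b / a) = z⁻¹ := by
    rw [hz, inv_div, one_sub_two_div_one_add_div ha.ne' hadd.ne']
  set L : ℝ := (Chebyshev.T ℝ k).eval ((z + z⁻¹) / 2)
  have hzL : z ^ k / 2 ≤ L := half_pow_le_eval_chebyshev_T hz0 k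
  have hL : 0 < L := lt_of_lt_of_le (by positivity) hzL
  set ℓ : ℝ[X] := C ((z + z⁻¹) / 2) - C (2 / (b ^ 2 - a ^ 2)) * X ^ 2 with hℓ
  have hℓ_deg : ℓ.natDegree ≤ 2 := by rw [hℓ]; compute_degree
  have hℓ_eval (x : ℝ) : ℓ.eval x = (b ^ 2 + a ^ 2 - 2 * x ^ 2) / (b ^ 2 - a ^ 2) := by
    have : b ^ 2 - a ^ 2 = (b - a) * (a + b) := by ring
    simp only [hℓ, eval_sub, eval_mul, eval_C, eval_pow, eval_X, hz, inv_div, this]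
    field_simp
    ring
  refine ⟨C L⁻¹ * (Chebyshev.T ℝ k).comp ℓ, ?_, ?_, fun x hax hxb => ?_⟩
  · calc _ ≤ (Chebyshev.T ℝ k).natDegree * ℓ.natDegree :=
          (natDegree_C_mul_le _ _).trans natDegree_comp_le
      _ ≤ k * 2 := by gcongr; simp
      _ = 2 * k := mul_comm _ _
  · simpa [coeff_zero_eq_eval_zero, hℓ] using inv_mul_cancel₀ hL.ne'
  · have hℓ_le : |ℓ.eval x| ≤ 1 := by
      have hax2 : a ^ 2 ≤ x ^ 2 := sq_le_sq.mpr (by rwa [abs_of_pos ha])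
      have hxb2 : x ^ 2 ≤ b ^ 2 := sq_le_sq.mpr (by rwa [abs_of_pos (ha.trans hab)])
      have hD : 0 < b ^ 2 - a ^ 2 := by nlinarith
      rw [hℓ_eval, abs_div, abs_of_pos hD, div_le_one hD, abs_le]
      constructor <;> linarith
    calc |(C L⁻¹ * (Chebyshev.T ℝ k).comp ℓ).eval x|
        = L⁻¹ * |(Chebyshev.T ℝ k).eval (ℓ.eval x)| := by
          rw [eval_mul, eval_comp, eval_C, abs_mul, abs_of_pos (inv_pos.mpr hL)]
      _ ≤ (z ^ k / 2)⁻¹ * 1 := by gcongr; exact Chebyshev.abs_eval_T_real_le_one _ hℓ_le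
      _ = 2 * (1 - 2 / (1 + b / a)) ^ k := by rw [hrate, inv_div, inv_pow]; ring

theorem exists_residual_polynomial {a b : ℝ} (ha : 0 < a) (hab : a ≤ b) (k : ℕ) :
    ∃ p : ℝ[X], p.natDegree ≤ 2 * k ∧ p.coeff 0 = 1 ∧
      ∀ x : ℝ, a ≤ |x| → |x| ≤ b → |p.eval x| ≤ 2 * (1 - 2 / (1 + b / a)) ^ k := by
  obtain hab | rfl := hab.lt_or_eq
  · exact exists_residual_polynomial_of_lt ha hab k
  refine ⟨(1 - C (a ^ 2)⁻¹ * X ^ 2) ^ k, ?_, by simp [coeff_zero_eq_eval_zero],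
    fun x hax hxa => ?_⟩
  · have : (1 - C (a ^ 2)⁻¹ * X ^ 2 : ℝ[X]).natDegree ≤ 2 := by compute_degree
    calc _ ≤ k * _ := natDegree_pow_le
      _ ≤ k * 2 := by gcongr
      _ = 2 * k := mul_comm _ _
  · have hx : x ^ 2 = a ^ 2 := by rw [← sq_abs, le_antisymm hxa hax]
    have hrate : 1 - 2 / (1 + a / a) = 0 := by
      rw [one_sub_two_div_one_add_div ha.ne' (add_pos ha ha).ne', sub_self, zero_div]
    simp only [eval_pow, eval_sub, eval_one, eval_mul, eval_C, eval_X, hx,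
      inv_mul_cancel₀ (pow_pos ha 2).ne', sub_self, hrate, abs_pow, abs_zero]
    exact le_mul_of_one_le_left (by positivity) one_le_two

end Residual

section DotProduct

variable {ι κ R : Type*} [Fintype ι] [CommSemiring R]

theorem mulVec_dotProduct [Fintype κ] (A : Matrix ι κ R) (x : κ → R) (y : ι → R) :
    A *ᵥ x ⬝ᵥ y = x ⬝ᵥ Aᵀ *ᵥ y := by
  rw [dotProduct_mulVec, vecMul_transpose]

theorem mulVec_dotProduct_of_isSymm {K : Matrix ι ι R} (hK : K.IsSymm) (x y : ι → R) :
    K *ᵥ x ⬝ᵥ y = x ⬝ᵥ K *ᵥ y := by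
  rw [mulVec_dotProduct, hK.eq]

theorem mulVec_dotProduct_mulVec_of_orthogonal [DecidableEq ι] {U : Matrix ι ι R}
    (hU : Uᵀ * U = 1) (x y : ι → R) : U *ᵥ x ⬝ᵥ U *ᵥ y = x ⬝ᵥ y := by
  rw [mulVec_dotProduct, mulVec_mulVec, hU, one_mulVec]

end DotProduct

section EuclideanVectors

variable {ι κ : Type*} [Fintype ι] [Fintype κ]

theorem vnorm_eq_norm_toLp (x : ι → ℝ) : vnorm x = ‖WithLp.toLp 2 x‖ := by
  simp [EuclideanSpace.norm_eq, vnorm]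

theorem vnorm_nonneg (x : ι → ℝ) : 0 ≤ vnorm x := Real.sqrt_nonneg _

theorem vnorm_sq (x : ι → ℝ) : vnorm x ^ 2 = x ⬝ᵥ x := by
  rw [vnorm, Real.sq_sqrt (Finset.sum_nonneg fun i _ => sq_nonneg _)]
  simp [dotProduct, sq]

theorem vnorm_pos {x : ι → ℝ} (hx : x ≠ 0) : 0 < vnorm x := by
  simpa [vnorm_eq_norm_toLp] using hx

theorem vnorm_smul (c : ℝ) (x : ι → ℝ) : vnorm (c • x) = |c| * vnorm x := by
  rw [vnorm_eq_norm_toLp, vnorm_eq_norm_toLp, WithLp.toLp_smul, norm_smul, Real.norm_eq_abs]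

theorem vnorm_le_sqrt {x : ι → ℝ} {c : ℝ} (h : x ⬝ᵥ x ≤ c) : vnorm x ≤ √c :=
  Real.le_sqrt_of_sq_le ((vnorm_sq x).trans_le h)

theorem abs_dotProduct_le (x y : ι → ℝ) : |x ⬝ᵥ y| ≤ vnorm x * vnorm y := by
  have h := abs_real_inner_le_norm (WithLp.toLp 2 x) (WithLp.toLp 2 y)
  rw [EuclideanSpace.inner_eq_star_dotProduct, ← vnorm_eq_norm_toLp, ← vnorm_eq_norm_toLp,
    dotProduct_comm] at h
  simpa using h

theorem specNorm_nonneg [DecidableEq κ] (A : Matrix ι κ ℝ) : 0 ≤ specNorm A := norm_nonneg _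

theorem abs_dotProduct_mulVec_le [DecidableEq κ] (A : Matrix ι κ ℝ) (x : ι → ℝ) (y : κ → ℝ) :
    |x ⬝ᵥ A *ᵥ y| ≤ specNorm A * vnorm x * vnorm y := by
  have hA : vnorm (A *ᵥ y) ≤ specNorm A * vnorm y := by
    rw [vnorm_eq_norm_toLp, vnorm_eq_norm_toLp]
    exact (LinearMap.toContinuousLinearMap (Matrix.toEuclideanLin A)).le_opNorm (WithLp.toLp 2 y)
  calc |x ⬝ᵥ A *ᵥ y| ≤ vnorm x * vnorm (A *ᵥ y) := abs_dotProduct_le _ _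
    _ ≤ vnorm x * (specNorm A * vnorm y) := mul_le_mul_of_nonneg_left hA (vnorm_nonneg x)
    _ = specNorm A * vnorm x * vnorm y := by ring

theorem vnorm_mulVec_of_orthogonal [DecidableEq ι] {R : Matrix ι ι ℝ} (hR : Rᵀ * R = 1)
    (x : ι → ℝ) : vnorm (R *ᵥ x) = vnorm x := by
  rw [← pow_left_inj₀ (vnorm_nonneg _) (vnorm_nonneg _) two_ne_zero, vnorm_sq, vnorm_sq,
    mulVec_dotProduct_mulVec_of_orthogonal hR]

theorem vnorm_mulVec_le_of_isIdempotentElem {P : Matrix ι ι ℝ} (hP : P.IsSymm)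
    (hPP : IsIdempotentElem P) (z : ι → ℝ) : vnorm (P *ᵥ z) ≤ vnorm z := by
  have hsq : vnorm (P *ᵥ z) * vnorm (P *ᵥ z) ≤ vnorm z * vnorm (P *ᵥ z) :=
    calc vnorm (P *ᵥ z) * vnorm (P *ᵥ z) = z ⬝ᵥ P *ᵥ z := by
          rw [← sq, vnorm_sq, mulVec_dotProduct_of_isSymm hP, mulVec_mulVec, hPP.eq]
      _ ≤ vnorm z * vnorm (P *ᵥ z) := (le_abs_self _).trans (abs_dotProduct_le _ _)
  obtain h0 | hpos := (vnorm_nonneg (P *ᵥ z)).eq_or_lt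
  · exact h0 ▸ vnorm_nonneg z
  · exact le_of_mul_le_mul_right hsq hpos

end EuclideanVectors

section Minres

open Polynomial

variable {ι : Type*} [Fintype ι] [DecidableEq ι]

theorem aeval_mulVec_of_mulVec_eq_smul {R : Type*} [CommSemiring R] {K : Matrix ι ι R}
    {v : ι → R} {l : R} (hv : K *ᵥ v = l • v) (p : R[X]) :
    aeval K p *ᵥ v = p.eval l • v := by
  induction p using Polynomial.induction_on' with
  | add p q hp hq => rw [map_add, add_mulVec, hp, hq, eval_add, add_smul]
  | monomial n c =>
    have hpow : K ^ n *ᵥ v = l ^ n • v := by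
      induction n with
      | zero => simp
      | succ n ih => rw [pow_succ, ← mulVec_mulVec, hv, mulVec_smul, ih, smul_smul, ← pow_succ']
    rw [aeval_monomial, ← Algebra.smul_def, smul_mulVec, hpow, eval_monomial, smul_smul]

theorem isSymm_aeval {R : Type*} [CommSemiring R] {K : Matrix ι ι R} (hK : K.IsSymm) (p : R[X]) :
    (aeval K p).IsSymm := by
  induction p using Polynomial.induction_on' with
  | add p q hp hq => rw [map_add]; exact hp.add hq
  | monomial n c => rw [aeval_monomial, ← Algebra.smul_def]; exact (hK.pow n).smul c

theorem vnorm_aeval_mulVec_le {K : Matrix ι ι ℝ} (hK : K.IsSymm) {r : ι → ℝ} {p : ℝ[X]} {c : ℝ}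
    (hc : 0 ≤ c)
    (hp : ∀ (v : ι → ℝ) (l : ℝ), K *ᵥ v = l • v → v ⬝ᵥ r ≠ 0 → |p.eval l| ≤ c) :
    vnorm (aeval K p *ᵥ r) ≤ c * vnorm r := by
  have hH : K.IsHermitian := by
    rw [IsHermitian, conjTranspose_eq_transpose_of_trivial, hK.eq]
  set e := hH.eigenvectorBasis
  have hinner (i : ι) (x : ι → ℝ) : inner ℝ (e i) (WithLp.toLp 2 x) = (e i).ofLp ⬝ᵥ x := by
    simp [EuclideanSpace.inner_eq_star_dotProduct, dotProduct_comm]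
  rw [vnorm_eq_norm_toLp, vnorm_eq_norm_toLp]
  refine le_of_sq_le_sq ?_ (by positivity)
  rw [mul_pow, ← e.sum_sq_norm_inner_right, ← e.sum_sq_norm_inner_right, Finset.mul_sum]
  refine Finset.sum_le_sum fun i _ => ?_
  have hei : K *ᵥ (e i).ofLp = hH.eigenvalues i • (e i).ofLp := hH.mulVec_eigenvectorBasis i
  rw [hinner, hinner, ← mulVec_dotProduct_of_isSymm (isSymm_aeval hK p),
    aeval_mulVec_of_mulVec_eq_smul hei, smul_dotProduct, norm_smul, mul_pow]
  obtain h0 | h0 := eq_or_ne ((e i).ofLp ⬝ᵥ r) 0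
  · rw [h0]; simp
  · gcongr
    exact hp _ _ hei h0

theorem exists_mem_Krylov_mulVec_add_eq_aeval (K : Matrix ι ι ℝ) (r : ι → ℝ) {p : ℝ[X]} {j : ℕ}
    (hdeg : p.natDegree ≤ j) (hp : p.coeff 0 = 1) :
    ∃ w ∈ Krylov K r j, K *ᵥ w + r = aeval K p *ᵥ r := by
  refine ⟨aeval K p.divX *ᵥ r, ?_, ?_⟩
  · rw [aeval_eq_sum_range, sum_mulVec]
    refine Submodule.sum_mem _ fun i _ => ?_
    rw [smul_mulVec]
    by_cases hij : i < j
    · exact Submodule.smul_mem _ _ (Submodule.subset_span ⟨i, hij, rfl⟩)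
    · rw [coeff_divX, coeff_eq_zero_of_natDegree_lt (by omega), zero_smul]
      exact Submodule.zero_mem _
  · conv_rhs => rw [← X_mul_divX_add p, hp]
    simp [add_mulVec]

theorem exists_mem_Krylov_vnorm_le {K P : Matrix ι ι ℝ} (hK : K.IsSymm) (hP : P.IsSymm)
    (hPP : IsIdempotentElem P) (hPK : Commute P K) {a b : ℝ} (ha : 0 < a)
    (hlow : ∀ z, P *ᵥ z = z → a * vnorm z ≤ vnorm (K *ᵥ z))
    (hup : ∀ z, P *ᵥ z = z → vnorm (K *ᵥ z) ≤ b * vnorm z)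
    {r : ι → ℝ} (hr : P *ᵥ r = r) (j : ℕ) :
    ∃ w ∈ Krylov K r j,
      vnorm (K *ᵥ w + r) ≤ 2 * (1 - 2 / (1 + b / a)) ^ (j / 2) * vnorm r := by
  obtain rfl | hr0 := eq_or_ne r 0
  · exact ⟨0, Submodule.zero_mem _, by simp [vnorm]⟩
  have hab : a ≤ b := le_of_mul_le_mul_right ((hlow r hr).trans (hup r hr)) (vnorm_pos hr0)
  obtain ⟨p, hdeg, hp0, hp⟩ := exists_residual_polynomial ha hab (j / 2)
  obtain ⟨w, hw, hres⟩ :=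
    exists_mem_Krylov_mulVec_add_eq_aeval K r (hdeg.trans (Nat.mul_div_le j 2)) hp0
  have hrate : 0 ≤ 2 * (1 - 2 / (1 + b / a)) ^ (j / 2) :=
    (abs_nonneg _).trans (hp a (le_abs_self a) (by rwa [abs_of_pos ha]))
  refine ⟨w, hw, hres ▸ vnorm_aeval_mulVec_le hK hrate fun v l hv hvr => ?_⟩
  -- `P v` is again an eigenvector, and it is nonzero because `P v ⬝ᵥ r = v ⬝ᵥ P r = v ⬝ᵥ r`.
  have hKPv : K *ᵥ P *ᵥ v = l • P *ᵥ v := by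
    rw [mulVec_mulVec, ← hPK.eq, ← mulVec_mulVec, hv, mulVec_smul]
  have hPPv : P *ᵥ P *ᵥ v = P *ᵥ v := by rw [mulVec_mulVec, hPP.eq]
  have hPv : 0 < vnorm (P *ᵥ v) := by
    refine vnorm_pos fun h0 => hvr ?_
    rw [← hr, ← mulVec_dotProduct_of_isSymm hP, h0, zero_dotProduct]
  have hal := hlow _ hPPv
  have hlb := hup _ hPPv
  rw [hKPv, vnorm_smul] at hal hlb
  exact hp l (le_of_mul_le_mul_right hal hPv) (le_of_mul_le_mul_right hlb hPv)

theorem sub_mul_vnorm_le_vnorm_compression {B P P' R : Matrix ι ι ℝ} (hP' : P'.IsSymm)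
    (hR : Rᵀ * R = 1) (hRP : P' * R = R * P) (hPB : Commute P B) {d δ : ℝ} (hδ : 0 ≤ δ)
    (hpert : ∀ y z, P *ᵥ y = y → P *ᵥ z = z →
      |R *ᵥ y ⬝ᵥ B *ᵥ R *ᵥ z - y ⬝ᵥ B *ᵥ z| ≤ δ * (vnorm y * vnorm z))
    (hlow : ∀ z, P *ᵥ z = z → d * vnorm z ≤ vnorm (B *ᵥ z))
    {z : ι → ℝ} (hz : P' *ᵥ z = z) :
    (d - δ) * vnorm z ≤ vnorm (P' *ᵥ B *ᵥ z) := by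
  have hR' : R * Rᵀ = 1 := mul_eq_one_comm.mp hR
  obtain ⟨y, rfl⟩ : ∃ y, z = R *ᵥ y := ⟨Rᵀ *ᵥ z, by rw [mulVec_mulVec, hR', one_mulVec]⟩
  have hy : P *ᵥ y = y := by
    rw [mulVec_mulVec, hRP, ← mulVec_mulVec] at hz
    simpa only [mulVec_mulVec, ← Matrix.mul_assoc, hR, Matrix.one_mul, one_mulVec] using
      congrArg (Rᵀ *ᵥ ·) hz
  set t := B *ᵥ y with ht
  have hPt : P *ᵥ t = t := by rw [ht, mulVec_mulVec, hPB.eq, ← mulVec_mulVec, hy]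
  have hP'Rt : P' *ᵥ R *ᵥ t = R *ᵥ t := by rw [mulVec_mulVec, hRP, ← mulVec_mulVec, hPt]
  set q := P' *ᵥ B *ᵥ R *ᵥ y with hq
  have hlow_y : d * vnorm y ≤ vnorm t := hlow y hy
  have hform : vnorm t * (vnorm t - δ * vnorm y) ≤ vnorm t * vnorm q :=
    calc vnorm t * (vnorm t - δ * vnorm y) = t ⬝ᵥ B *ᵥ y - δ * (vnorm t * vnorm y) := by
          rw [← ht, ← vnorm_sq]; ring
      _ ≤ R *ᵥ t ⬝ᵥ B *ᵥ R *ᵥ y := by linarith [(abs_le.mp (hpert t y hPt hy)).1]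
      _ = R *ᵥ t ⬝ᵥ q := by rw [hq, ← mulVec_dotProduct_of_isSymm hP', hP'Rt]
      _ ≤ vnorm (R *ᵥ t) * vnorm q := (le_abs_self _).trans (abs_dotProduct_le _ _)
      _ = vnorm t * vnorm q := by rw [vnorm_mulVec_of_orthogonal hR]
  rw [vnorm_mulVec_of_orthogonal hR]
  obtain ht0 | htpos := (vnorm_nonneg t).eq_or_lt
  · linarith [mul_nonneg hδ (vnorm_nonneg y), vnorm_nonneg q]
  · linarith [le_of_mul_le_mul_left hform htpos]

end Minres
section OrthogonalProjector

variable {ι : Type*} [DecidableEq ι]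

/-- The orthogonal projection onto the orthogonal complement of the unit vector `u`. -/
def orthogonalProjector (u : ι → ℝ) : Matrix ι ι ℝ := 1 - vecMulVec u u

theorem orthogonalProjector_isSymm (u : ι → ℝ) : (orthogonalProjector u).IsSymm :=
  isSymm_one.sub (transpose_vecMulVec u u)

variable [Fintype ι] {u x : ι → ℝ}

theorem orthogonalProjector_isIdempotentElem (hu : u ⬝ᵥ u = 1) :
    IsIdempotentElem (orthogonalProjector u) := by
  rw [IsIdempotentElem, orthogonalProjector, Matrix.sub_mul, Matrix.mul_sub, Matrix.mul_sub,
    vecMulVec_mul_vecMulVec, hu]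
  simp

theorem dotProduct_eq_zero_of_orthogonalProjector_mulVec (hu : u ⬝ᵥ u = 1)
    (hx : orthogonalProjector u *ᵥ x = x) : u ⬝ᵥ x = 0 := by
  rw [← hx, orthogonalProjector, sub_mulVec, one_mulVec, vecMulVec_mulVec, op_smul_eq_smul,
    dotProduct_sub, dotProduct_smul, hu, smul_eq_mul, mul_one, sub_self]

end OrthogonalProjector

section Householder

variable {ι : Type*} [Fintype ι] {u t x : ι → ℝ}

/-- The sine of the angle between the lines spanned by two unit vectors. -/
noncomputable def sinAngle (u t : ι → ℝ) : ℝ := √(1 - (u ⬝ᵥ t) ^ 2)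

/-- The multiple of `u + t` whose inner products with the unit vectors `u` and `t` are `1`;
it is `0` when `t = -u`. -/
noncomputable def bisector (u t : ι → ℝ) : ι → ℝ := (1 + u ⬝ᵥ t)⁻¹ • (u + t)

/-- The reflection in the hyperplane orthogonal to `u + t`, for unit vectors `u` and `t`: it maps
`u` to `-t` and `t` to `-u`. It is the identity when `t = -u`. -/
noncomputable def householder [DecidableEq ι] (u t : ι → ℝ) : Matrix ι ι ℝ :=
  1 - vecMulVec (bisector u t) (u + t)

theorem sinAngle_nonneg (u t : ι → ℝ) : 0 ≤ sinAngle u t := Real.sqrt_nonneg _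

theorem dotProduct_le_one (hu : u ⬝ᵥ u = 1) (ht : t ⬝ᵥ t = 1) : u ⬝ᵥ t ≤ 1 := by
  have h (w : ι → ℝ) (hw : w ⬝ᵥ w = 1) : vnorm w ≤ 1 := by simpa using vnorm_le_sqrt hw.le
  exact (le_abs_self _).trans <| (abs_dotProduct_le u t).trans <|
    mul_le_one₀ (h u hu) (vnorm_nonneg t) (h t ht)

theorem abs_dotProduct_le_sinAngle_mul_vnorm (hu : u ⬝ᵥ u = 1) (ht : t ⬝ᵥ t = 1)
    (hux : u ⬝ᵥ x = 0) : |t ⬝ᵥ x| ≤ sinAngle u t * vnorm x := by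
  set w := t - (u ⬝ᵥ t) • u
  have hwx : t ⬝ᵥ x = w ⬝ᵥ x := by simp [w, hux]
  have hww : w ⬝ᵥ w ≤ 1 - (u ⬝ᵥ t) ^ 2 := by
    simp only [w, sub_dotProduct, dotProduct_sub, smul_dotProduct, dotProduct_smul, smul_eq_mul,
      hu, ht, dotProduct_comm t u]
    linarith
  calc |t ⬝ᵥ x| = |w ⬝ᵥ x| := by rw [hwx]
    _ ≤ vnorm w * vnorm x := abs_dotProduct_le w x
    _ ≤ sinAngle u t * vnorm x := mul_le_mul_of_nonneg_right (vnorm_le_sqrt hww) (vnorm_nonneg x)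

theorem bisector_dotProduct_left (hu : u ⬝ᵥ u = 1) (hut : 1 + u ⬝ᵥ t ≠ 0) :
    bisector u t ⬝ᵥ u = 1 := by
  rw [bisector, smul_dotProduct, add_dotProduct, hu, dotProduct_comm t, smul_eq_mul,
    inv_mul_cancel₀ hut]

theorem bisector_dotProduct_right (ht : t ⬝ᵥ t = 1) (hut : 1 + u ⬝ᵥ t ≠ 0) :
    bisector u t ⬝ᵥ t = 1 := by
  rw [bisector, smul_dotProduct, add_dotProduct, ht, add_comm _ 1, smul_eq_mul,
    inv_mul_cancel₀ hut]

theorem bisector_dotProduct_self (hu : u ⬝ᵥ u = 1) (ht : t ⬝ᵥ t = 1) (hut : 1 + u ⬝ᵥ t ≠ 0) :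
    bisector u t ⬝ᵥ bisector u t = 2 / (1 + u ⬝ᵥ t) := by
  calc bisector u t ⬝ᵥ bisector u t = (1 + u ⬝ᵥ t)⁻¹ * (bisector u t ⬝ᵥ (u + t)) :=
        dotProduct_smul _ _ _
    _ = 2 / (1 + u ⬝ᵥ t) := by
        rw [dotProduct_add, bisector_dotProduct_left hu hut, bisector_dotProduct_right ht hut,
          one_add_one_eq_two, div_eq_inv_mul]

theorem vnorm_bisector_le (hu : u ⬝ᵥ u = 1) (ht : t ⬝ᵥ t = 1) (hut : 0 ≤ u ⬝ᵥ t) :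
    vnorm (bisector u t) ≤ √2 := by
  refine vnorm_le_sqrt ?_
  rw [bisector_dotProduct_self hu ht (by linarith)]
  exact div_le_self two_pos.le (by linarith)

theorem vnorm_bisector_sub_le_sinAngle (hu : u ⬝ᵥ u = 1) (ht : t ⬝ᵥ t = 1) (hut : 0 ≤ u ⬝ᵥ t) :
    vnorm (bisector u t - u) ≤ sinAngle u t := by
  have hc : 1 + u ⬝ᵥ t ≠ 0 := by linarith
  have hc1 : u ⬝ᵥ t ≤ 1 := dotProduct_le_one hu ht
  refine vnorm_le_sqrt ?_
  calc (bisector u t - u) ⬝ᵥ (bisector u t - u) = 2 / (1 + u ⬝ᵥ t) - 1 := by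
        simp only [sub_dotProduct, dotProduct_sub, bisector_dotProduct_self hu ht hc,
          dotProduct_comm u (bisector u t), bisector_dotProduct_left hu hc, hu]
        ring
    _ = (1 - u ⬝ᵥ t) / (1 + u ⬝ᵥ t) := by field_simp; ring
    _ ≤ 1 - u ⬝ᵥ t := div_le_self (by linarith) (by linarith)
    _ ≤ 1 - (u ⬝ᵥ t) ^ 2 := by nlinarith

theorem abs_bisector_dotProduct_mulVec_le {κ : Type*} [Fintype κ] [DecidableEq κ]
    (A : Matrix ι κ ℝ) {v w : κ → ℝ} (hu : u ⬝ᵥ u = 1) (ht : t ⬝ᵥ t = 1) (hv : v ⬝ᵥ v = 1)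
    (hw : w ⬝ᵥ w = 1) (hut : 0 ≤ u ⬝ᵥ t) (hvw : 0 ≤ v ⬝ᵥ w) :
    |bisector u t ⬝ᵥ A *ᵥ bisector v w| ≤ specNorm A * 2 :=
  calc |bisector u t ⬝ᵥ A *ᵥ bisector v w|
      ≤ specNorm A * (vnorm (bisector u t) * vnorm (bisector v w)) :=
        (abs_dotProduct_mulVec_le A _ _).trans_eq (mul_assoc _ _ _)
    _ ≤ specNorm A * (√2 * √2) := mul_le_mul_of_nonneg_left
        (mul_le_mul (vnorm_bisector_le hu ht hut) (vnorm_bisector_le hv hw hvw)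
          (vnorm_nonneg _) (Real.sqrt_nonneg 2)) (specNorm_nonneg A)
    _ = specNorm A * 2 := by rw [Real.mul_self_sqrt zero_le_two]

variable [DecidableEq ι]

theorem householder_mulVec (u t x : ι → ℝ) :
    householder u t *ᵥ x = x - ((u + t) ⬝ᵥ x) • bisector u t := by
  rw [householder, sub_mulVec, one_mulVec, vecMulVec_mulVec, op_smul_eq_smul]

theorem householder_mulVec_left (hu : u ⬝ᵥ u = 1) (hut : 1 + u ⬝ᵥ t ≠ 0) :
    householder u t *ᵥ u = -t := by
  rw [householder_mulVec, add_dotProduct, hu, dotProduct_comm t, bisector, smul_inv_smul₀ hut]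
  abel

theorem householder_isSymm (u t : ι → ℝ) : (householder u t).IsSymm := by
  refine isSymm_one.sub ?_
  rw [bisector, smul_vecMulVec]
  exact IsSymm.smul (transpose_vecMulVec _ _) _

theorem householder_transpose_mul_self (hu : u ⬝ᵥ u = 1) (ht : t ⬝ᵥ t = 1)
    (hut : 1 + u ⬝ᵥ t ≠ 0) : (householder u t)ᵀ * householder u t = 1 := by
  have hbis : (u + t) ⬝ᵥ bisector u t = 2 := by
    rw [dotProduct_comm, dotProduct_add, bisector_dotProduct_left hu hut,
      bisector_dotProduct_right ht hut, one_add_one_eq_two]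
  rw [(householder_isSymm u t).eq, householder, Matrix.sub_mul, Matrix.mul_sub, Matrix.mul_sub,
    vecMulVec_mul_vecMulVec, hbis, vecMulVec_smul,
    two_smul]
  simp only [Matrix.mul_one, Matrix.one_mul]
  abel

theorem orthogonalProjector_mul_householder (hu : u ⬝ᵥ u = 1) (ht : t ⬝ᵥ t = 1)
    (hut : 1 + u ⬝ᵥ t ≠ 0) :
    orthogonalProjector t * householder u t = householder u t * orthogonalProjector u := by
  have hleft : t ᵥ* householder u t = -u := by
    rw [← mulVec_transpose, (householder_isSymm u t).eq, ← neg_eq_iff_eq_neg, ← mulVec_neg,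
      ← householder_mulVec_left hu hut, mulVec_mulVec]
    nth_rw 1 [← (householder_isSymm u t).eq]
    rw [householder_transpose_mul_self hu ht hut, one_mulVec]
  rw [orthogonalProjector, orthogonalProjector, Matrix.sub_mul, Matrix.mul_sub, vecMulVec_mul,
    mul_vecMulVec, householder_mulVec_left hu hut, hleft]
  simp

theorem exists_orthogonalProjector_eq_dotProduct_nonneg (u : ι → ℝ) (ht : t ⬝ᵥ t = 1) :
    ∃ t', orthogonalProjector t' = orthogonalProjector t ∧ t' ⬝ᵥ t' = 1 ∧ 0 ≤ u ⬝ᵥ t' ∧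
      sinAngle u t' = sinAngle u t := by
  obtain hut | hut := le_total 0 (u ⬝ᵥ t)
  · exact ⟨t, rfl, ht, hut, rfl⟩
  · refine ⟨-t, ?_, ?_, ?_, ?_⟩
    · simp [orthogonalProjector]
    · simpa using ht
    · simpa using hut
    · simp [sinAngle]

end Householder
section BlockVectors

variable {m n : Type*} [Fintype m] [Fintype n]

theorem dotProduct_sum_type {R : Type*} [NonUnitalNonAssocSemiring R] (z w : m ⊕ n → R) :
    z ⬝ᵥ w = (z ∘ Sum.inl) ⬝ᵥ (w ∘ Sum.inl) + (z ∘ Sum.inr) ⬝ᵥ (w ∘ Sum.inr) := by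
  rw [← sumElim_dotProduct_sumElim, Sum.elim_comp_inl_inr, Sum.elim_comp_inl_inr]

theorem vnorm_mul_vnorm_add_le (z w : m ⊕ n → ℝ) :
    vnorm (z ∘ Sum.inl) * vnorm (w ∘ Sum.inr) + vnorm (w ∘ Sum.inl) * vnorm (z ∘ Sum.inr) ≤
      vnorm z * vnorm w := by
  have hsq (z : m ⊕ n → ℝ) : vnorm z ^ 2 = vnorm (z ∘ Sum.inl) ^ 2 + vnorm (z ∘ Sum.inr) ^ 2 := by
    simp only [vnorm_sq, dotProduct_sum_type]
  refine le_of_sq_le_sq ?_ (mul_nonneg (vnorm_nonneg z) (vnorm_nonneg w))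
  rw [mul_pow, hsq, hsq]
  linarith [sq_nonneg (vnorm (z ∘ Sum.inl) * vnorm (w ∘ Sum.inl) -
    vnorm (z ∘ Sum.inr) * vnorm (w ∘ Sum.inr))]

variable [DecidableEq m] [DecidableEq n]

theorem fromBlocks_diagonal_transpose_mul_self {R : Type*} [CommSemiring R] {P : Matrix m m R}
    {Q : Matrix n n R} (hP : Pᵀ * P = 1) (hQ : Qᵀ * Q = 1) :
    (fromBlocks P 0 0 Q)ᵀ * fromBlocks P 0 0 Q = 1 := by
  simp [fromBlocks_transpose, fromBlocks_multiply, hP, hQ]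

end BlockVectors

section ShiftedAugmented

variable {m n : Type*} [DecidableEq m] [DecidableEq n]

/-- The augmented matrix of `A`, whose eigenvalues are the singular values of `A` up to sign
together with zeros, shifted by `τ`. -/
def shiftedAugmented (A : Matrix m n ℝ) (τ : ℝ) : Matrix (m ⊕ n) (m ⊕ n) ℝ :=
  fromBlocks ((-τ) • 1) A Aᵀ ((-τ) • 1)

theorem shiftedAugmented_isSymm (A : Matrix m n ℝ) (τ : ℝ) : (shiftedAugmented A τ).IsSymm :=
  (isSymm_one.smul _).fromBlocks rfl (isSymm_one.smul _)

variable [Fintype m] [Fintype n]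

theorem dotProduct_shiftedAugmented_mulVec (A : Matrix m n ℝ) (τ : ℝ) (w z : m ⊕ n → ℝ) :
    w ⬝ᵥ shiftedAugmented A τ *ᵥ z = (w ∘ Sum.inl) ⬝ᵥ A *ᵥ (z ∘ Sum.inr) +
      (z ∘ Sum.inl) ⬝ᵥ A *ᵥ (w ∘ Sum.inr) - τ * (w ⬝ᵥ z) := by
  rw [shiftedAugmented, fromBlocks_mulVec, dotProduct_sum_type w, dotProduct_sum_type w z,
    Sum.elim_comp_inl, Sum.elim_comp_inr]
  simp only [dotProduct_add, smul_mulVec, one_mulVec, dotProduct_smul, smul_eq_mul,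
    ← mulVec_dotProduct, dotProduct_comm (z ∘ Sum.inl)]
  ring

end ShiftedAugmented

section Deflation

variable {m n : Type*} [DecidableEq m] [DecidableEq n]

/-- The projection `diag(I - u uᵀ, I - v vᵀ)`, which removes the components along the (approximate)
singular vectors `u` and `v`. -/
def deflation (u : m → ℝ) (v : n → ℝ) : Matrix (m ⊕ n) (m ⊕ n) ℝ :=
  fromBlocks (orthogonalProjector u) 0 0 (orthogonalProjector v)

theorem deflation_isSymm (u : m → ℝ) (v : n → ℝ) : (deflation u v).IsSymm :=
  (orthogonalProjector_isSymm u).fromBlocks transpose_zero (orthogonalProjector_isSymm v)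

variable [Fintype m] [Fintype n] {u : m → ℝ} {v : n → ℝ}

theorem deflation_isIdempotentElem (hu : u ⬝ᵥ u = 1) (hv : v ⬝ᵥ v = 1) :
    IsIdempotentElem (deflation u v) := by
  simp [IsIdempotentElem, deflation, fromBlocks_multiply,
    (orthogonalProjector_isIdempotentElem hu).eq, (orthogonalProjector_isIdempotentElem hv).eq]

theorem dotProduct_eq_zero_of_deflation_mulVec (hu : u ⬝ᵥ u = 1) (hv : v ⬝ᵥ v = 1)
    {z : m ⊕ n → ℝ} (hz : deflation u v *ᵥ z = z) :
    u ⬝ᵥ (z ∘ Sum.inl) = 0 ∧ v ⬝ᵥ (z ∘ Sum.inr) = 0 := by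
  rw [deflation, fromBlocks_mulVec] at hz
  constructor
  · exact dotProduct_eq_zero_of_orthogonalProjector_mulVec hu
      (by simpa using congrArg (· ∘ Sum.inl) hz)
  · exact dotProduct_eq_zero_of_orthogonalProjector_mulVec hv
      (by simpa using congrArg (· ∘ Sum.inr) hz)

end Deflation

section SingularPair

variable {m n : Type*} [Fintype m] [Fintype n]

/-- `s` is a singular value of `A`, up to sign, with left and right unit singular vectors `u` and
`v`. -/
structure IsSingularPair (A : Matrix m n ℝ) (s : ℝ) (u : m → ℝ) (v : n → ℝ) : Prop where
  left_unit : u ⬝ᵥ u = 1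
  right_unit : v ⬝ᵥ v = 1
  mulVec_right : A *ᵥ v = s • u
  transpose_mulVec_left : Aᵀ *ᵥ u = s • v

variable [DecidableEq m] [DecidableEq n] {A : Matrix m n ℝ} {s τ : ℝ} {u u' : m → ℝ} {v v' : n → ℝ}

namespace IsSingularPair

theorem commute_deflation_shiftedAugmented (h : IsSingularPair A s u v) (τ : ℝ) :
    Commute (deflation u v) (shiftedAugmented A τ) := by
  have hu : u ᵥ* A = s • v := by rw [← mulVec_transpose, h.transpose_mulVec_left]
  have hv : v ᵥ* Aᵀ = s • u := by rw [vecMul_transpose, h.mulVec_right]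
  rw [Commute, SemiconjBy, deflation, shiftedAugmented, fromBlocks_multiply, fromBlocks_multiply]
  simp [orthogonalProjector, Matrix.sub_mul, Matrix.mul_sub, vecMulVec_mul, mul_vecMulVec, hu, hv,
    h.mulVec_right, h.transpose_mulVec_left, vecMulVec_smul, smul_vecMulVec]

theorem householder_dotProduct_mulVec_sub (h : IsSingularPair A s u v) (u' : m → ℝ) (v' : n → ℝ)
    {x : m → ℝ} {y : n → ℝ} (hx : u ⬝ᵥ x = 0) (hy : v ⬝ᵥ y = 0) :
    householder u u' *ᵥ x ⬝ᵥ A *ᵥ householder v v' *ᵥ y - x ⬝ᵥ A *ᵥ y =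
      (u' ⬝ᵥ x) * (v' ⬝ᵥ y) * (bisector u u' ⬝ᵥ A *ᵥ bisector v v') -
        (v' ⬝ᵥ y) * (x ⬝ᵥ A *ᵥ (bisector v v' - v)) -
          (u' ⬝ᵥ x) * ((bisector u u' - u) ⬝ᵥ A *ᵥ y) := by
  have hxAv : x ⬝ᵥ A *ᵥ v = 0 := by
    rw [h.mulVec_right, dotProduct_smul, dotProduct_comm, hx, smul_zero]
  have huAy : u ⬝ᵥ A *ᵥ y = 0 := by
    rw [dotProduct_comm, mulVec_dotProduct, h.transpose_mulVec_left, dotProduct_smul,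
      dotProduct_comm, hy, smul_zero]
  simp only [householder_mulVec, add_dotProduct, hx, hy, zero_add, mulVec_sub, mulVec_smul,
    sub_dotProduct, dotProduct_sub, smul_dotProduct, dotProduct_smul, smul_eq_mul, hxAv, huAy]
  ring

theorem abs_householder_dotProduct_mulVec_sub_le (h : IsSingularPair A s u v)
    (hu' : u' ⬝ᵥ u' = 1) (hv' : v' ⬝ᵥ v' = 1) (huu' : 0 ≤ u ⬝ᵥ u') (hvv' : 0 ≤ v ⬝ᵥ v')
    {x : m → ℝ} {y : n → ℝ} (hx : u ⬝ᵥ x = 0) (hy : v ⬝ᵥ y = 0) :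
    |householder u u' *ᵥ x ⬝ᵥ A *ᵥ householder v v' *ᵥ y - x ⬝ᵥ A *ᵥ y| ≤
      specNorm A * (sinAngle u u' + sinAngle v v') ^ 2 * (vnorm x * vnorm y) := by
  set p := bisector u u'
  set q := bisector v v'
  set a := sinAngle u u'
  set b := sinAngle v v'
  have hα : |u' ⬝ᵥ x| ≤ a * vnorm x := abs_dotProduct_le_sinAngle_mul_vnorm h.left_unit hu' hx
  have hβ : |v' ⬝ᵥ y| ≤ b * vnorm y := abs_dotProduct_le_sinAngle_mul_vnorm h.right_unit hv' hy
  have hxq : |x ⬝ᵥ A *ᵥ (q - v)| ≤ specNorm A * vnorm x * b :=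
    (abs_dotProduct_mulVec_le A _ _).trans <| mul_le_mul_of_nonneg_left
      (vnorm_bisector_sub_le_sinAngle h.right_unit hv' hvv')
      (mul_nonneg (specNorm_nonneg A) (vnorm_nonneg x))
  have hpy : |(p - u) ⬝ᵥ A *ᵥ y| ≤ specNorm A * a * vnorm y :=
    (abs_dotProduct_mulVec_le A _ _).trans <| mul_le_mul_of_nonneg_right
      (mul_le_mul_of_nonneg_left (vnorm_bisector_sub_le_sinAngle h.left_unit hu' huu')
        (specNorm_nonneg A)) (vnorm_nonneg y)
  have hpq : |p ⬝ᵥ A *ᵥ q| ≤ specNorm A * 2 :=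
    abs_bisector_dotProduct_mulVec_le A h.left_unit hu' h.right_unit hv' huu' hvv'
  have ha : 0 ≤ a := sinAngle_nonneg _ _
  have hb : 0 ≤ b := sinAngle_nonneg _ _
  have hx0 := vnorm_nonneg x
  have hy0 := vnorm_nonneg y
  rw [h.householder_dotProduct_mulVec_sub u' v' hx hy]
  calc _ ≤ |u' ⬝ᵥ x| * |v' ⬝ᵥ y| * |p ⬝ᵥ A *ᵥ q| + |v' ⬝ᵥ y| * |x ⬝ᵥ A *ᵥ (q - v)| +
        |u' ⬝ᵥ x| * |(p - u) ⬝ᵥ A *ᵥ y| := by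
        simp only [← abs_mul]
        exact (abs_sub _ _).trans (add_le_add_left (abs_sub _ _) _)
    _ ≤ a * vnorm x * (b * vnorm y) * (specNorm A * 2) +
        b * vnorm y * (specNorm A * vnorm x * b) + a * vnorm x * (specNorm A * a * vnorm y) := by
        gcongr
    _ = specNorm A * (a + b) ^ 2 * (vnorm x * vnorm y) := by ring

theorem abs_dotProduct_shiftedAugmented_mulVec_sub_le (h : IsSingularPair A s u v)
    (hu' : u' ⬝ᵥ u' = 1) (hv' : v' ⬝ᵥ v' = 1) (huu' : 0 ≤ u ⬝ᵥ u') (hvv' : 0 ≤ v ⬝ᵥ v')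
    {R : Matrix (m ⊕ n) (m ⊕ n) ℝ} (hR : R = fromBlocks (householder u u') 0 0 (householder v v'))
    (hRR : Rᵀ * R = 1) {w z : m ⊕ n → ℝ} (hw : deflation u v *ᵥ w = w)
    (hz : deflation u v *ᵥ z = z) :
    |R *ᵥ w ⬝ᵥ shiftedAugmented A τ *ᵥ R *ᵥ z - w ⬝ᵥ shiftedAugmented A τ *ᵥ z| ≤
      specNorm A * (sinAngle u u' + sinAngle v v') ^ 2 * (vnorm w * vnorm z) := by
  obtain ⟨hw₁, hw₂⟩ := dotProduct_eq_zero_of_deflation_mulVec h.left_unit h.right_unit hw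
  obtain ⟨hz₁, hz₂⟩ := dotProduct_eq_zero_of_deflation_mulVec h.left_unit h.right_unit hz
  have hinl (z : m ⊕ n → ℝ) : (R *ᵥ z) ∘ Sum.inl = householder u u' *ᵥ (z ∘ Sum.inl) := by
    simp [hR, fromBlocks_mulVec]
  have hinr (z : m ⊕ n → ℝ) : (R *ᵥ z) ∘ Sum.inr = householder v v' *ᵥ (z ∘ Sum.inr) := by
    simp [hR, fromBlocks_mulVec]
  rw [dotProduct_shiftedAugmented_mulVec, dotProduct_shiftedAugmented_mulVec,
    mulVec_dotProduct_mulVec_of_orthogonal hRR, sub_sub_sub_cancel_right, add_sub_add_comm, hinl,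
    hinl, hinr, hinr]
  have hwz := h.abs_householder_dotProduct_mulVec_sub_le hu' hv' huu' hvv' hw₁ hz₂
  have hzw := h.abs_householder_dotProduct_mulVec_sub_le hu' hv' huu' hvv' hz₁ hw₂
  refine ((abs_add_le _ _).trans (add_le_add hwz hzw)).trans ?_
  rw [← mul_add]
  exact mul_le_mul_of_nonneg_left (vnorm_mul_vnorm_add_le w z)
    (mul_nonneg (specNorm_nonneg A) (sq_nonneg _))

theorem sub_mul_vnorm_le_vnorm_deflation_mulVec_of_nonneg (h : IsSingularPair A s u v)
    (hu' : u' ⬝ᵥ u' = 1) (hv' : v' ⬝ᵥ v' = 1) (huu' : 0 ≤ u ⬝ᵥ u') (hvv' : 0 ≤ v ⬝ᵥ v') {d : ℝ}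
    (hlow : ∀ z, deflation u v *ᵥ z = z → d * vnorm z ≤ vnorm (shiftedAugmented A τ *ᵥ z))
    {z : m ⊕ n → ℝ} (hz : deflation u' v' *ᵥ z = z) :
    (d - specNorm A * (sinAngle u u' + sinAngle v v') ^ 2) * vnorm z ≤
      vnorm (deflation u' v' *ᵥ shiftedAugmented A τ *ᵥ z) := by
  have hu : 1 + u ⬝ᵥ u' ≠ 0 := by linarith
  have hv : 1 + v ⬝ᵥ v' ≠ 0 := by linarith
  set R := fromBlocks (householder u u') 0 0 (householder v v') with hR
  have hRR : Rᵀ * R = 1 := fromBlocks_diagonal_transpose_mul_self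
    (householder_transpose_mul_self h.left_unit hu' hu)
    (householder_transpose_mul_self h.right_unit hv' hv)
  have hRP : deflation u' v' * R = R * deflation u v := by
    simp [hR, deflation, fromBlocks_multiply,
      orthogonalProjector_mul_householder h.left_unit hu' hu,
      orthogonalProjector_mul_householder h.right_unit hv' hv]
  exact sub_mul_vnorm_le_vnorm_compression (deflation_isSymm u' v') hRR hRP
    (h.commute_deflation_shiftedAugmented τ) (mul_nonneg (specNorm_nonneg A) (sq_nonneg _))
    (fun _ _ => h.abs_dotProduct_shiftedAugmented_mulVec_sub_le hu' hv' huu' hvv' hR hRR) hlow hz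

theorem sub_mul_vnorm_le_vnorm_deflation_mulVec (h : IsSingularPair A s u v)
    (hu' : u' ⬝ᵥ u' = 1) (hv' : v' ⬝ᵥ v' = 1) {d : ℝ}
    (hlow : ∀ z, deflation u v *ᵥ z = z → d * vnorm z ≤ vnorm (shiftedAugmented A τ *ᵥ z))
    {z : m ⊕ n → ℝ} (hz : deflation u' v' *ᵥ z = z) :
    (d - specNorm A * (sinAngle u u' + sinAngle v v') ^ 2) * vnorm z ≤
      vnorm (deflation u' v' *ᵥ shiftedAugmented A τ *ᵥ z) := by
  obtain ⟨x, hx_proj, hx, hux, hx_sin⟩ := exists_orthogonalProjector_eq_dotProduct_nonneg u hu'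
  obtain ⟨y, hy_proj, hy, hvy, hy_sin⟩ := exists_orthogonalProjector_eq_dotProduct_nonneg v hv'
  have hxy : deflation u' v' = deflation x y := by rw [deflation, ← hx_proj, ← hy_proj, deflation]
  rw [hxy] at hz ⊢
  rw [← hx_sin, ← hy_sin]
  exact h.sub_mul_vnorm_le_vnorm_deflation_mulVec_of_nonneg hx hy hux hvy hlow hz

end IsSingularPair

end SingularPair
section RectDiagonal

variable {m n : Type*} [DecidableEq m]

/-- The rectangular diagonal matrix whose column `j` has its only nonzero entry `σ j` in the row
`f j`. -/
def rectDiagonal (f : n ↪ m) (σ : n → ℝ) : Matrix m n ℝ :=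
  of fun i j => if i = f j then σ j else 0

theorem rectDiagonal_mulVec_single [DecidableEq n] [Fintype n] (f : n ↪ m) (σ : n → ℝ) (k : n) :
    rectDiagonal f σ *ᵥ Pi.single k 1 = σ k • Pi.single (f k) 1 := by
  ext i
  simp [rectDiagonal, Pi.single_apply]

theorem rectDiagonal_transpose_mulVec [Fintype m] (f : n ↪ m) (σ : n → ℝ) (x : m → ℝ) :
    (rectDiagonal f σ)ᵀ *ᵥ x = fun j => σ j * x (f j) := by
  ext j
  simp [rectDiagonal, mulVec, dotProduct]

theorem rectDiagonal_mulVec_apply [Fintype n] (f : n ↪ m) (σ y : n → ℝ) (j : n) :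
    (rectDiagonal f σ *ᵥ y) (f j) = σ j * y j := by
  classical
  simp [rectDiagonal, mulVec, dotProduct]

theorem rectDiagonal_mulVec_of_notMem_range [Fintype n] {f : n ↪ m} (σ y : n → ℝ) {i : m}
    (hi : i ∉ Set.range f) : (rectDiagonal f σ *ᵥ y) i = 0 := by
  have hij (j : n) : i ≠ f j := fun hij => hi ⟨j, hij.symm⟩
  simp [rectDiagonal, mulVec, dotProduct, hij]

variable [Fintype m] [Fintype n]

theorem vnorm_sq_eq_sum_add_sum_compl_map (f : n ↪ m) (z : m ⊕ n → ℝ) :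
    vnorm z ^ 2 = ∑ j, (z (Sum.inl (f j)) ^ 2 + z (Sum.inr j) ^ 2) +
      ∑ i ∈ (Finset.univ.map f)ᶜ, z (Sum.inl i) ^ 2 := by
  rw [vnorm_sq, dotProduct_sum_type, dotProduct, ← Finset.sum_add_sum_compl (Finset.univ.map f),
    Finset.sum_map, Finset.sum_add_distrib]
  simp only [Function.comp_apply, dotProduct, sq]
  ring

variable [DecidableEq n]

-- The shifted augmented matrix splits into the blocks `[[-τ, σ j], [σ j, -τ]]`, with eigenvalues
-- `± σ j - τ`, and the scalar `-τ` on the rows outside the range of `f`.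
theorem vnorm_shiftedAugmented_rectDiagonal_mulVec_sq (f : n ↪ m) (σ : n → ℝ) (τ : ℝ)
    (z : m ⊕ n → ℝ) :
    vnorm (shiftedAugmented (rectDiagonal f σ) τ *ᵥ z) ^ 2 =
      ∑ j, ((σ j * z (Sum.inr j) - τ * z (Sum.inl (f j))) ^ 2 +
        (σ j * z (Sum.inl (f j)) - τ * z (Sum.inr j)) ^ 2) +
      ∑ i ∈ (Finset.univ.map f)ᶜ, (τ * z (Sum.inl i)) ^ 2 := by
  rw [vnorm_sq_eq_sum_add_sum_compl_map f, shiftedAugmented, fromBlocks_mulVec]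
  congr 1
  · refine Finset.sum_congr rfl fun j _ => ?_
    simp only [Sum.elim_inl, Sum.elim_inr, Pi.add_apply, smul_mulVec, one_mulVec, Pi.smul_apply,
      Function.comp_apply, smul_eq_mul, rectDiagonal_mulVec_apply, rectDiagonal_transpose_mulVec]
    ring
  · refine Finset.sum_congr rfl fun i hi => ?_
    have hi : i ∉ Set.range f := by simpa using hi
    simp only [Sum.elim_inl, Pi.add_apply, smul_mulVec, one_mulVec, Pi.smul_apply,
      Function.comp_apply, smul_eq_mul, rectDiagonal_mulVec_of_notMem_range _ _ hi]
    ring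

theorem mul_vnorm_le_vnorm_shiftedAugmented_rectDiagonal {f : n ↪ m} {σ : n → ℝ}
    (hσ : ∀ j, 0 ≤ σ j) {τ d : ℝ} (hτ : 0 ≤ τ) (hd : 0 ≤ d) {k : n}
    (hgap : ∀ j ≠ k, d ≤ |σ j - τ|) (hker : ∀ i ∉ Set.range f, d ≤ τ) {z : m ⊕ n → ℝ}
    (hzl : z (Sum.inl (f k)) = 0) (hzr : z (Sum.inr k) = 0) :
    d * vnorm z ≤ vnorm (shiftedAugmented (rectDiagonal f σ) τ *ᵥ z) := by
  refine le_of_sq_le_sq ?_ (vnorm_nonneg _)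
  rw [mul_pow, vnorm_shiftedAugmented_rectDiagonal_mulVec_sq, vnorm_sq_eq_sum_add_sum_compl_map f,
    mul_add, Finset.mul_sum, Finset.mul_sum]
  refine add_le_add (Finset.sum_le_sum fun j _ => ?_) (Finset.sum_le_sum fun i hi => ?_)
  · obtain rfl | hj := eq_or_ne j k
    · simp [hzl, hzr]
    set x := z (Sum.inl (f j))
    set y := z (Sum.inr j)
    calc d ^ 2 * (x ^ 2 + y ^ 2) ≤ (σ j - τ) ^ 2 * (x ^ 2 + y ^ 2) := by
          rw [← sq_abs (σ j - τ)]
          gcongr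
          exact hgap j hj
      _ ≤ (σ j - τ) ^ 2 * (x ^ 2 + y ^ 2) + 2 * (σ j * τ) * (x - y) ^ 2 :=
          le_add_of_nonneg_right
            (mul_nonneg (mul_nonneg zero_le_two (mul_nonneg (hσ j) hτ)) (sq_nonneg _))
      _ = _ := by ring
  · rw [mul_pow]
    gcongr
    exact hker i (by simpa using hi)

theorem vnorm_shiftedAugmented_rectDiagonal_le [Nonempty n] {f : n ↪ m} {σ : n → ℝ}
    (hσ : ∀ j, 0 ≤ σ j) {τ b : ℝ} (hτ : 0 ≤ τ) (hb : ∀ j, σ j + τ ≤ b) (z : m ⊕ n → ℝ) :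
    vnorm (shiftedAugmented (rectDiagonal f σ) τ *ᵥ z) ≤ b * vnorm z := by
  have hτb : τ ≤ b := Nonempty.elim ‹_› fun j => by linarith [hσ j, hb j]
  refine le_of_sq_le_sq ?_ (mul_nonneg (hτ.trans hτb) (vnorm_nonneg z))
  rw [mul_pow, vnorm_shiftedAugmented_rectDiagonal_mulVec_sq, vnorm_sq_eq_sum_add_sum_compl_map f,
    mul_add, Finset.mul_sum, Finset.mul_sum]
  refine add_le_add (Finset.sum_le_sum fun j _ => ?_) (Finset.sum_le_sum fun i _ => ?_)
  · set x := z (Sum.inl (f j))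
    set y := z (Sum.inr j)
    calc (σ j * y - τ * x) ^ 2 + (σ j * x - τ * y) ^ 2
        ≤ (σ j * y - τ * x) ^ 2 + (σ j * x - τ * y) ^ 2 + 2 * (σ j * τ) * (x + y) ^ 2 :=
          le_add_of_nonneg_right
            (mul_nonneg (mul_nonneg zero_le_two (mul_nonneg (hσ j) hτ)) (sq_nonneg _))
      _ = (σ j + τ) ^ 2 * (x ^ 2 + y ^ 2) := by ring
      _ ≤ b ^ 2 * (x ^ 2 + y ^ 2) := by
          have := add_nonneg (hσ j) hτ
          gcongr
          exact hb j
  · rw [mul_pow]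
    gcongr

end RectDiagonal

section SVD

variable {m n : Type*} [Fintype m] [Fintype n] [DecidableEq m] [DecidableEq n]

/-- `A = U Σ Vᵀ` with `U` and `V` orthogonal, where `f` places the diagonal of `Σ` in its rows.
The diagonal entries `σ` are neither ordered nor required to be nonnegative. -/
structure IsSVD (A : Matrix m n ℝ) (U : Matrix m m ℝ) (V : Matrix n n ℝ) (f : n ↪ m)
    (σ : n → ℝ) : Prop where
  left_orthogonal : Uᵀ * U = 1
  right_orthogonal : Vᵀ * V = 1
  eq_mul_mul : A = U * rectDiagonal f σ * Vᵀ

namespace IsSVD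

variable {A : Matrix m n ℝ} {U : Matrix m m ℝ} {V : Matrix n n ℝ} {f : n ↪ m} {σ : n → ℝ}

theorem mul_right (h : IsSVD A U V f σ) : A * V = U * rectDiagonal f σ := by
  rw [h.eq_mul_mul, Matrix.mul_assoc, h.right_orthogonal, Matrix.mul_one]

theorem transpose_mul_left (h : IsSVD A U V f σ) : Aᵀ * U = V * (rectDiagonal f σ)ᵀ := by
  rw [h.eq_mul_mul, transpose_mul, transpose_mul, transpose_transpose, Matrix.mul_assoc,
    Matrix.mul_assoc, h.left_orthogonal, Matrix.mul_one]

theorem isSingularPair (h : IsSVD A U V f σ) (k : n) :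
    IsSingularPair A (σ k) (U.col (f k)) (V.col k) where
  left_unit := by
    rw [← mulVec_single_one, mulVec_dotProduct_mulVec_of_orthogonal h.left_orthogonal]
    simp
  right_unit := by
    rw [← mulVec_single_one, mulVec_dotProduct_mulVec_of_orthogonal h.right_orthogonal]
    simp
  mulVec_right := by
    rw [← mulVec_single_one, mulVec_mulVec, h.mul_right, ← mulVec_mulVec,
      rectDiagonal_mulVec_single, mulVec_smul, mulVec_single_one]
  transpose_mulVec_left := by
    have hcol : (rectDiagonal f σ)ᵀ *ᵥ Pi.single (f k) 1 = σ k • Pi.single k 1 := by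
      rw [rectDiagonal_transpose_mulVec]
      ext j
      obtain rfl | hj := eq_or_ne j k <;> simp [*]
    rw [← mulVec_single_one, mulVec_mulVec, h.transpose_mul_left, ← mulVec_mulVec, hcol,
      mulVec_smul, mulVec_single_one]

theorem vnorm_fromBlocks_transpose_mulVec (h : IsSVD A U V f σ) (z : m ⊕ n → ℝ) :
    vnorm ((fromBlocks U 0 0 V)ᵀ *ᵥ z) = vnorm z := by
  have hW := fromBlocks_diagonal_transpose_mul_self h.left_orthogonal h.right_orthogonal
  rw [vnorm_mulVec_of_orthogonal (by rwa [transpose_transpose, mul_eq_one_comm])]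

theorem vnorm_shiftedAugmented_mulVec (h : IsSVD A U V f σ) (τ : ℝ) (z : m ⊕ n → ℝ) :
    vnorm (shiftedAugmented A τ *ᵥ z) =
      vnorm (shiftedAugmented (rectDiagonal f σ) τ *ᵥ (fromBlocks U 0 0 V)ᵀ *ᵥ z) := by
  have hW := fromBlocks_diagonal_transpose_mul_self h.left_orthogonal h.right_orthogonal
  have hcomm : shiftedAugmented A τ * fromBlocks U 0 0 V =
      fromBlocks U 0 0 V * shiftedAugmented (rectDiagonal f σ) τ := by
    simp [shiftedAugmented, fromBlocks_multiply, h.mul_right, h.transpose_mul_left]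
  have hz : z = fromBlocks U 0 0 V *ᵥ (fromBlocks U 0 0 V)ᵀ *ᵥ z := by
    rw [mulVec_mulVec, mul_eq_one_comm.mp hW, one_mulVec]
  conv_lhs => rw [hz, mulVec_mulVec, hcomm, ← mulVec_mulVec, vnorm_mulVec_of_orthogonal hW]

theorem mul_vnorm_le_vnorm_shiftedAugmented (h : IsSVD A U V f σ) (hσ : ∀ j, 0 ≤ σ j) {τ d : ℝ}
    (hτ : 0 ≤ τ) (hd : 0 ≤ d) {k : n} (hgap : ∀ j ≠ k, d ≤ |σ j - τ|)
    (hker : ∀ i ∉ Set.range f, d ≤ τ) {z : m ⊕ n → ℝ}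
    (hz : deflation (U.col (f k)) (V.col k) *ᵥ z = z) :
    d * vnorm z ≤ vnorm (shiftedAugmented A τ *ᵥ z) := by
  have hk := h.isSingularPair k
  obtain ⟨hzl, hzr⟩ : (Uᵀ *ᵥ (z ∘ Sum.inl)) (f k) = 0 ∧ (Vᵀ *ᵥ (z ∘ Sum.inr)) k = 0 :=
    dotProduct_eq_zero_of_deflation_mulVec hk.left_unit hk.right_unit hz
  rw [h.vnorm_shiftedAugmented_mulVec, ← h.vnorm_fromBlocks_transpose_mulVec z]
  refine mul_vnorm_le_vnorm_shiftedAugmented_rectDiagonal hσ hτ hd hgap hker ?_ ?_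
  · simpa [fromBlocks_transpose, fromBlocks_mulVec] using hzl
  · simpa [fromBlocks_transpose, fromBlocks_mulVec] using hzr

theorem vnorm_shiftedAugmented_mulVec_le [Nonempty n] (h : IsSVD A U V f σ) (hσ : ∀ j, 0 ≤ σ j)
    {τ b : ℝ} (hτ : 0 ≤ τ) (hb : ∀ j, σ j + τ ≤ b) (z : m ⊕ n → ℝ) :
    vnorm (shiftedAugmented A τ *ᵥ z) ≤ b * vnorm z := by
  rw [h.vnorm_shiftedAugmented_mulVec, ← h.vnorm_fromBlocks_transpose_mulVec z]
  exact vnorm_shiftedAugmented_rectDiagonal_le hσ hτ hb _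

end IsSVD

end SVD

-- If the least `s₂` of the other `σ i` were at least `τ`, then `|σ k - τ| < s₂ - τ` would put the
-- mean of `s` and `s₂` above `τ`.
theorem gap_le_shift_of_isLeast {ι : Type*} {σ : ι → ℝ} (hσ : ∀ i, 0 ≤ σ i) {τ : ℝ} {k : ι}
    (hclosest : ∀ i ≠ k, |σ k - τ| < |σ i - τ|) {s s₂ d : ℝ} (hs : IsLeast (Set.range σ) s)
    (hs₂ : IsLeast (σ '' {i | i ≠ k}) s₂) (hτ : (s + s₂) / 2 < τ)
    (hd : d ∈ lowerBounds ((fun i => |σ i - τ|) '' {i | i ≠ k})) : d ≤ τ := by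
  obtain ⟨i, hi, rfl⟩ := hs₂.1
  have hdi : d ≤ |σ i - τ| := hd ⟨i, hi, rfl⟩
  have hiτ : σ i < τ := by
    by_contra! hτi
    obtain ⟨l, rfl⟩ := hs.1
    obtain rfl | hl := eq_or_ne l k
    · have hlτ : |σ l - τ| < σ i - τ :=
        (hclosest i hi).trans_eq (abs_of_nonneg (sub_nonneg.mpr hτi))
      linarith [(abs_lt.mp hlτ).1]
    · linarith [hs₂.2 ⟨l, hl, rfl⟩]
  rw [abs_of_neg (sub_neg.mpr hiτ)] at hdi
  linarith [hσ i]

-- Off the deflated pair the spectrum of `B` consists of the numbers `± σ i - τ` and, when `m` is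
-- larger than `n`, of `-τ`: this is the origin of `hgap` and `hker`.
theorem minres_bound_approx_interior_general {m n : Type*} [Fintype m] [Fintype n]
    [DecidableEq m] [DecidableEq n] {A : Matrix m n ℝ} {U : Matrix m m ℝ} {V : Matrix n n ℝ}
    {f : n ↪ m} {σ : n → ℝ} (hA : IsSVD A U V f σ) (hσ : ∀ i, 0 ≤ σ i) {τ : ℝ} (hτ : 0 ≤ τ)
    (k : n) {d : ℝ} (hgap : ∀ i ≠ k, d ≤ |σ i - τ|) (hker : ∀ i ∉ Set.range f, d ≤ τ)
    {b : ℝ} (hb : ∀ i, σ i + τ ≤ b) {u : m → ℝ} {v : n → ℝ} (hu : u ⬝ᵥ u = 1) (hv : v ⬝ᵥ v = 1)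
    {δ : ℝ} (hδ : δ = specNorm A * (sinAngle (U.col (f k)) u + sinAngle (V.col k) v) ^ 2)
    (hδd : δ < d) {r : m ⊕ n → ℝ} (hr : deflation u v *ᵥ r = r) (j : ℕ) :
    ∃ w ∈ Krylov (deflation u v * shiftedAugmented A τ * deflation u v) r j,
      vnorm ((deflation u v * shiftedAugmented A τ * deflation u v) *ᵥ w + r) ≤
        2 * (1 - 2 / (1 + b / (d - δ))) ^ (j / 2) * vnorm r := by
  have : Nonempty n := ⟨k⟩
  set P := deflation u v
  set B := shiftedAugmented A τ
  have hP : P.IsSymm := deflation_isSymm u v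
  have hPP : P * P = P := deflation_isIdempotentElem hu hv
  have hPBP : (P * B * P).IsSymm := by
    simp only [IsSymm, transpose_mul, hP.eq, (shiftedAugmented_isSymm A τ).eq, B, Matrix.mul_assoc]
  have hcomm : Commute P (P * B * P) := by
    simp only [Commute, SemiconjBy, Matrix.mul_assoc, hPP]
    simp only [← Matrix.mul_assoc, hPP]
  have hmulVec {z : m ⊕ n → ℝ} (hz : P *ᵥ z = z) : (P * B * P) *ᵥ z = P *ᵥ B *ᵥ z := by
    rw [← mulVec_mulVec, hz, mulVec_mulVec]
  have hδ0 : 0 ≤ δ := hδ ▸ mul_nonneg (specNorm_nonneg A) (sq_nonneg _)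
  refine exists_mem_Krylov_vnorm_le hPBP hP hPP hcomm (sub_pos.mpr hδd) (fun z hz => ?_)
    (fun z hz => ?_) hr j
  · rw [hmulVec hz, hδ]
    exact (hA.isSingularPair k).sub_mul_vnorm_le_vnorm_deflation_mulVec hu hv
      (fun _ => hA.mul_vnorm_le_vnorm_shiftedAugmented hσ hτ (hδ0.trans hδd.le) hgap hker) hz
  · rw [hmulVec hz]
    exact (vnorm_mulVec_le_of_isIdempotentElem hP hPP _).trans
      (hA.vnorm_shiftedAugmented_mulVec_le hσ hτ hb z)

/-- Theorem 3.5(iii). MINRES bound for the JDSVD correction equation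
with approximate singular vectors, in the interior case. -/
theorem minres_bound_approx_interior {M N : ℕ} (hN : 2 ≤ N) (hMN : N ≤ M)
    (A : Matrix (Fin M) (Fin N) ℝ)
    (U : Matrix (Fin M) (Fin M) ℝ) (V : Matrix (Fin N) (Fin N) ℝ)
    (hU : Uᵀ * U = 1) (hV : Vᵀ * V = 1)
    (σ : Fin N → ℝ) (hσ : ∀ i, 0 ≤ σ i)
    (S : Matrix (Fin M) (Fin N) ℝ)
    (hS : ∀ i j, S i j = if (i : ℕ) = (j : ℕ) then σ j else 0)
    (hA : A = U * S * Vᵀ)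
    (τ : ℝ) (hτ0 : 0 ≤ τ)
    (hclosest : ∀ i : Fin N, i ≠ ⟨0, by omega⟩ → |σ ⟨0, by omega⟩ - τ| < |σ i - τ|)
    (hτσ : ∀ i : Fin N, τ ≠ σ i)
    (σmax σmax2 σmin σmin2 : ℝ)
    (hσmax : IsGreatest (Set.range σ) σmax)
    (hσmax2 : IsGreatest (σ '' {i : Fin N | i ≠ ⟨0, by omega⟩}) σmax2)
    (hσmin : IsLeast (Set.range σ) σmin)
    (hσmin2 : IsLeast (σ '' {i : Fin N | i ≠ ⟨0, by omega⟩}) σmin2)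
    (hτ1 : (σmin + σmin2) / 2 < τ) (hτ2 : τ < (σmax + σmax2) / 2)
    (d2 : ℝ)
    (hd2 : IsLeast ((fun i => |σ i - τ|) '' {i : Fin N | i ≠ ⟨0, by omega⟩}) d2)
    (u1 : Fin M → ℝ) (hu1 : u1 = fun i => U i ⟨0, by omega⟩)
    (v1 : Fin N → ℝ) (hv1 : v1 = fun i => V i ⟨0, by omega⟩)
    (u1t : Fin M → ℝ) (hu1t : ∑ i, u1t i ^ 2 = 1)
    (v1t : Fin N → ℝ) (hv1t : ∑ i, v1t i ^ 2 = 1)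
    (δ : ℝ)
    (hδ : δ = specNorm A *
      (Real.sqrt (1 - (u1 ⬝ᵥ u1t) ^ 2) + Real.sqrt (1 - (v1 ⬝ᵥ v1t) ^ 2)) ^ 2)
    (hδsmall : δ < d2)
    (B P B1 : Matrix (Fin M ⊕ Fin N) (Fin M ⊕ Fin N) ℝ)
    (hB : B = Matrix.fromBlocks ((-τ) • 1) A Aᵀ ((-τ) • 1))
    (hP : P = Matrix.fromBlocks (1 - vecMulVec u1t u1t) 0 0 (1 - vecMulVec v1t v1t))
    (hB1 : B1 = P * B * P)
    (r : Fin M ⊕ Fin N → ℝ) (hr : P *ᵥ r = r) :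
    ∀ j : ℕ, ∃ w ∈ Krylov B1 r j,
      vnorm (B1 *ᵥ w + r) ≤
        2 * (1 - 2 / (1 + (σmax + τ + δ) / (d2 - δ))) ^ (j / 2) * vnorm r := by
  have hS : S = rectDiagonal (Fin.castLEEmb hMN) σ := by
    ext i j
    simp [hS, rectDiagonal, Fin.ext_iff]
  have hP : P = deflation u1t v1t := hP
  have hB : B = shiftedAugmented A τ := hB
  have hδ0 : 0 ≤ δ := hδ ▸ mul_nonneg (specNorm_nonneg A) (sq_nonneg _)
  have hgap (i : Fin N) (hi : i ≠ ⟨0, by omega⟩) : d2 ≤ |σ i - τ| := hd2.2 ⟨i, hi, rfl⟩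
  have hb (i : Fin N) : σ i + τ ≤ σmax + τ + δ := by linarith [hσmax.2 ⟨i, rfl⟩]
  have hu : u1t ⬝ᵥ u1t = 1 := by simpa only [dotProduct, ← sq] using hu1t
  have hv : v1t ⬝ᵥ v1t = 1 := by simpa only [dotProduct, ← sq] using hv1t
  subst hB1 hP hB hu1 hv1 hS
  exact minres_bound_approx_interior_general ⟨hU, hV, hA⟩ hσ hτ0 ⟨0, by omega⟩ hgap
    (fun _ _ => gap_le_shift_of_isLeast hσ hclosest hσmin hσmin2 hτ1 hd2.2) hb hu hv hδ hδsmall hr
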